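/- The state E′ = (0, 2, 2^2, 2^3, …, 2^{2k}, 2^{2k+1}, 2^{2k+2} − 2, 0) is embanked with h(E′) = (2^{2k+2} − 1, 2^{2k+2} − 1), and N(E′) = E′[1] = (0, 2, 2^2, …, 2^{2k+2}, 0), which is the state S_{k+1}. -/

import Mathlib

/-!
The orbit of `E'` can be written down explicitly. Put `K = 2k + 2`, `M = 2 ^ K`, and let
`⟨n / 2 ^ j⟩` be the nearest integer, so that the parities of `⟨n / 2 ^ j⟩`, `j ≥ 1`, are the
Gray code digits of `n`.

* The Zero rule creates `a_0 = -1`, so a Halve rule follows at once. The state obtained is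
  `a_0 = M - 2`, `a_j = ⟨(M - 1) / 2 ^ j⟩` for `j ≥ 1`, whose `n` is `M - 1`.
* The sum of its entries is odd, so Increment rules count `n` upwards: as long as `a_0 ≠ -1`,
  the state is `a_0 = 2M - 3 - n`, `a_j = ⟨n / 2 ^ j⟩`.
* At `n = 2M - 2` we have `a_0 = -1`, and the second Halve rule leads to `a_0 = M - 1`,
  `a_j = ⟨(M - 1) / 2 ^ j⟩`, again with `n = M - 1` but with even sum.
* Now Increment rules count `n` downwards, through `a_0 = n`,
  `a_j = 2 ⟨(M - 1) / 2 ^ j⟩ - ⟨n / 2 ^ j⟩`, to `n = 0`. There `a_j = 2 ⟨(M - 1) / 2 ^ j⟩`,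
  which is `S_{k+1}`.

Two facts carry this. Passing between `n` and `n + 1 = 2 ^ j * odd` changes `⟨n / 2 ^ i⟩` exactly
for `i = j + 1`, by one (`near_succ`), and in both counting phases the rightmost odd entry is then
`a_j` (`near_even`, `near_odd`), so the Increment rule acts on `a_{j+1}`. Moreover, a state with
the Gray code parities of `n` has `nOf = n`, and the parity of its sum is that of `a_0 + n`
(`nOf_mk`, `odd_sum_mk`).
-/

open scoped Classical

namespace Skelet17

/-- The five kinds of transition rules. -/
inductive Rule
  | overflow | halt | zero | halve | increment
  deriving DecidableEq

/-- A state `(a_ℓ, …, a_1, a_0)` (written left to right, `a_0` rightmost) is stored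
as the list `[a_0, a_1, …, a_ℓ]`, i.e. with the *rightmost* entry first. -/
abbrev State := List ℤ

/-- The leftmost entry `a_ℓ` of a state. -/
def leftmost (S : State) : ℤ := S.getLastD 0

/-- The entry `a_i(S)`. -/
def entry (S : State) (i : ℕ) : ℤ := S.getD i 0

/-- `ℓ(S) = |S| - 1`. -/
def ell (S : State) : ℕ := S.length - 1

/-- The Overflow rule applies: the leftmost entry is odd and all other entries are even. -/
def OverflowCond (S : State) : Prop := Odd (leftmost S) ∧ ∀ x ∈ S.dropLast, Even x

/-- The Halt rule applies: all entries are even and the two leftmost entries are `0`. -/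
def HaltCond (S : State) : Prop :=
  (∀ x ∈ S, Even x) ∧ S.getLastD 1 = 0 ∧ S.dropLast.getLastD 1 = 0

/-- The Zero rule applies: all entries are even and the Halt rule does not apply. -/
def ZeroCond (S : State) : Prop := (∀ x ∈ S, Even x) ∧ ¬ HaltCond S

/-- The Halve rule applies: `a_0 = -1` and none of the earlier rules applies. -/
def HalveCond (S : State) : Prop :=
  ¬ OverflowCond S ∧ ¬ HaltCond S ∧ ¬ ZeroCond S ∧ S.headD 0 = -1

/-- The rule applied to a state (the first matching rule). -/
noncomputable def ruleOf (S : State) : Rule :=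
  if OverflowCond S then .overflow
  else if HaltCond S then .halt
  else if ZeroCond S then .zero
  else if S.headD 0 = -1 then .halve
  else .increment

/-- The transition function `P`.  (On a Halt state the process stops; we set `P S = S` there.)
Recall the list stores `a_0` first, so e.g. the Overflow rule
`(2a_ℓ+1, 2a_{ℓ-1}, …, 2a_0) ↦ (0, 2a_ℓ+2, 2a_{ℓ-1}, …, 2a_0)` appends a `0` at the end of
the list and adds `1` to the previously last element. -/
noncomputable def P (S : State) : State :=
  match ruleOf S with
  | .overflow => S.dropLast ++ [leftmost S + 1, 0]
  | .halt => S
  | .zero => (S.set 0 (S.headD 0 - 1)).set (S.length - 1) (leftmost S + 1) ++ [0, 0]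
  | .halve => S.tail
  | .increment =>
      let i := S.findIdx (fun x => x % 2 != 0)   -- index of the rightmost odd entry
      (S.set (i + 1) (S.getD (i + 1) 0 + 1)).set 0 (S.headD 0 - 1)

/-- `S ↦ T` : some iterate of `P` sends `S` to `T`. -/
def Reaches (S T : State) : Prop := ∃ m : ℕ, P^[m] S = T

/-- `σ(S) = +1` if the sum of the entries is odd, `-1` if it is even. -/
noncomputable def sigma (S : State) : ℤ := if Odd S.sum then 1 else -1

/-- `n(S)`: the natural number whose Gray code digits (least significant first) are
`a_1 mod 2, a_2 mod 2, …, a_ℓ mod 2`.  Equivalently (standard Gray-code decoding),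
bit `i` of `n(S)` is the parity of `a_{i+1} + ⋯ + a_ℓ`. -/
def nOf (S : State) : ℕ :=
  ∑ i ∈ Finset.range (ell S),
    2 ^ i * ((∑ j ∈ Finset.Icc (i + 1) (ell S), entry S j) % 2).toNat

/-- `⟨a / 2^j⟩` : the nearest integer to `a / 2^j`, rounding half-integers up. -/
def nearest (j a : ℕ) : ℕ := (2 * a + 2 ^ j) / 2 ^ (j + 1)

/-- `d_j(a, b) = |⟨a/2^j⟩ - ⟨b/2^j⟩|`. -/
def dd (j a b : ℕ) : ℕ := Nat.dist (nearest j a) (nearest j b)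

/-- `S_k = (0, 2, 2^2, …, 2^{2k}, 0)`. -/
def Sk (k : ℕ) : State :=
  0 :: (((List.range (2 * k)).map fun i => (2 : ℤ) ^ (2 * k - i)) ++ [0])

/-- An empty state: `n(E) = 0`, `σ(E) = -1`, and the next rule applied is not Halt. -/
def IsEmptyState (E : State) : Prop :=
  E ≠ [] ∧ nOf E = 0 ∧ sigma E = -1 ∧ ruleOf E ≠ Rule.halt

/-- `m` is the first positive time at which the trajectory of `E` is at an empty state. -/
def NextEmptyAt (E : State) (m : ℕ) : Prop :=
  0 < m ∧ IsEmptyState (P^[m] E) ∧ ∀ t, 0 < t → t < m → ¬ IsEmptyState (P^[t] E)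

/-- `N(E)` : the next empty state after `E` (junk value `[]` if it does not exist). -/
noncomputable def N (E : State) : State :=
  if h : ∃ m, NextEmptyAt E m then P^[h.choose] E else []

/-- The rule applied at time `j` belongs to `T_E`, the sequence of rules from `E` to the
next empty state after `E` (all rules after `E` when no next empty state exists). -/
def InTE (E : State) (j : ℕ) : Prop := ∀ t, 0 < t → t ≤ j → ¬ IsEmptyState (P^[t] E)

/-- Weakly embanked: `T_E` consists of one Zero rule at the start and contains at least two
Halve rules, and all other rules before the second Halve rule are Increment rules. -/
def WeaklyEmbanked (E : State) : Prop :=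
  IsEmptyState E ∧
  ∃ j₁ j₂, 0 < j₁ ∧ j₁ < j₂ ∧ InTE E j₂ ∧
    ruleOf (P^[j₁] E) = Rule.halve ∧ ruleOf (P^[j₂] E) = Rule.halve ∧
    ∀ t, 0 < t → t < j₂ → t ≠ j₁ → ruleOf (P^[t] E) = Rule.increment

/-- Embanked: the next empty state `N(E)` exists and the non-Increment rules of `T_E` consist
of exactly one Zero rule at the start and exactly two Halve rules elsewhere. -/
def Embanked (E : State) : Prop :=
  IsEmptyState E ∧
  ∃ m j₁ j₂, NextEmptyAt E m ∧ 0 < j₁ ∧ j₁ < j₂ ∧ j₂ < m ∧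
    ruleOf (P^[j₁] E) = Rule.halve ∧ ruleOf (P^[j₂] E) = Rule.halve ∧
    ∀ t, 0 < t → t < m → t ≠ j₁ → t ≠ j₂ → ruleOf (P^[t] E) = Rule.increment

/-- `h_i(E)` (`i ∈ {1,2}`): the value of `n` at the state immediately *after* the `i`-th
Halve rule applied after `E`. -/
noncomputable def hVal (E : State) (i : ℕ) : ℕ :=
  nOf (P^[Nat.nth (fun j => ruleOf (P^[j] E) = Rule.halve) (i - 1) + 1] E)

/-- `s_i(E)` (`i ∈ {1,2}`): the value of `n` at the state immediately *before* the `i`-th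
Halve rule applied after `E`. -/
noncomputable def sVal (E : State) (i : ℕ) : ℕ :=
  nOf (P^[Nat.nth (fun j => ruleOf (P^[j] E) = Rule.halve) (i - 1)] E)

/-- `E[i]` : the state `E` with the entry `a_i` replaced by `a_i + 2`. -/
def bump (E : State) (i : ℕ) : State := E.set i (E.getD i 0 + 2)

/-- `N'(E) = N^{⌈(i+1)/2⌉}(E)` for an embanked state `E` with `N(E) = E[i]`
(junk value `E` if no such `i` exists). -/
noncomputable def N' (E : State) : State :=
  if h : ∃ i, i < E.length ∧ N E = bump E i then N^[(h.choose + 2) / 2] E else E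

/-- A rooted embanked state: an embanked state obtained from `S_k` by applying `N'`
some number of times. -/
def RootedEmbanked (k : ℕ) (E : State) : Prop :=
  Embanked E ∧ ∃ e : ℕ, N'^[e] (Sk k) = E

/-- `κ_{E→E'}(j)` : the number of steps `S ↦ N(S)` with `N(S) = S[j]` along the chain
`E, N(E), N²(E), …, N^[t](E) = E'`. -/
noncomputable def kappa (E : State) (t j : ℕ) : ℕ :=
  ((Finset.range t).filter fun s => N (N^[s] E) = bump (N^[s] E) j).card


/-- `(0, 2, 2^2, 2^3, …, 2^{2k}, 2^{2k+1}, 2^{2k+2} - 2, 0)`, i.e. `a_0 = 0`,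
`a_1 = 2^{2k+2} - 2`, `a_j = 2^{2k+3-j}` for `j ∈ [2, 2k+2]`, and `a_{2k+3} = 0`
(stored rightmost-first). -/
def Eprime (k : ℕ) : State :=
  0 :: ((2 : ℤ) ^ (2 * k + 2) - 2) ::
    (((List.range (2 * k + 1)).map fun i => (2 : ℤ) ^ (2 * k + 1 - i)) ++ [0])

/-! ### States as finite restrictions of sequences -/

/-- The state `(e L, …, e 1, e 0)`. -/
def mk (L : ℕ) (e : ℕ → ℤ) : State := (List.range (L + 1)).map e

/-- The sequence `a, g 0, g 1, …`. -/
def cns (a : ℤ) (g : ℕ → ℤ) : ℕ → ℤ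
  | 0 => a
  | i + 1 => g i

/-- `near n i = ⟨n / 2 ^ (i + 1)⟩`, the nearest integer with half-integers rounded up. -/
def near (n i : ℕ) : ℕ := (n + 2 ^ i) / 2 ^ (i + 1)

lemma length_mk (L : ℕ) (e : ℕ → ℤ) : (mk L e).length = L + 1 := by simp [mk]

lemma mk_succ (L : ℕ) (e : ℕ → ℤ) : mk (L + 1) e = mk L e ++ [e (L + 1)] := by
  simp [mk, List.range_succ]

lemma mk_cons (L : ℕ) (e : ℕ → ℤ) : mk (L + 1) e = e 0 :: mk L (fun i => e (i + 1)) := by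
  simp only [mk]
  rw [List.range_succ_eq_map]
  simp [Function.comp_def]

lemma mem_mk {L : ℕ} {e : ℕ → ℤ} {x : ℤ} : x ∈ mk L e ↔ ∃ i ≤ L, e i = x := by
  simp only [mk, List.mem_map, List.mem_range, Nat.lt_succ_iff]

lemma getElem?_mk (L : ℕ) (e : ℕ → ℤ) (i : ℕ) :
    (mk L e)[i]? = if i ≤ L then some (e i) else none := by
  by_cases h : i ≤ L
  · simp [mk, h, Nat.lt_succ_of_le h]
  · simp [mk, h]

lemma mk_congr {L : ℕ} {e e' : ℕ → ℤ} (h : ∀ i ≤ L, e i = e' i) : mk L e = mk L e' := by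
  apply List.map_congr_left
  intro i hi
  exact h i (by simpa [Nat.lt_succ_iff] using hi)

lemma leftmost_mk (L : ℕ) (e : ℕ → ℤ) : leftmost (mk L e) = e L := by
  simp [leftmost, mk, List.range_succ]

lemma headD_mk (L : ℕ) (e : ℕ → ℤ) : (mk L e).headD 0 = e 0 := by
  cases L <;> simp [mk, List.range_succ_eq_map]

/-! ### The rules on such states -/

/-- Only the Halve and Increment rules can apply when a non-leftmost entry is odd. -/
lemma ruleOf_of_odd {L : ℕ} {e : ℕ → ℤ} {j : ℕ} (hj : j < L) (ho : Odd (e j)) :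
    ruleOf (mk L e) = if e 0 = -1 then Rule.halve else Rule.increment := by
  have hne : ¬ ∀ x ∈ mk L e, Even x := fun h =>
    (Int.not_even_iff_odd.2 ho) (h _ (mem_mk.2 ⟨j, hj.le, rfl⟩))
  have h1 : ¬ OverflowCond (mk L e) := by
    rintro ⟨-, h⟩
    obtain ⟨L, rfl⟩ : ∃ l, L = l + 1 := ⟨L - 1, by omega⟩
    rw [mk_succ, List.dropLast_concat] at h
    exact (Int.not_even_iff_odd.2 ho) (h _ (mem_mk.2 ⟨j, by omega, rfl⟩))
  have h2 : ¬ HaltCond (mk L e) := fun h => hne h.1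
  have h3 : ¬ ZeroCond (mk L e) := fun h => hne h.1
  simp only [ruleOf, h1, h2, h3, if_false, headD_mk]

lemma findIdx_mk {L : ℕ} {e : ℕ → ℤ} {j : ℕ} (hj : j < L) (ho : Odd (e j))
    (hev : ∀ i < j, Even (e i)) : (mk L e).findIdx (fun x => x % 2 != 0) = j := by
  have hlt : j < (mk L e).length := by rw [length_mk]; omega
  rw [List.findIdx_eq hlt]
  constructor
  · have := Int.odd_iff.1 ho
    simp [mk, this]
  · intro i hi
    have := Int.even_iff.1 (hev i hi)
    simp [mk, this]

lemma increment_mk {L : ℕ} {e e' : ℕ → ℤ} {j : ℕ} (hj : j < L) (ho : Odd (e j))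
    (hev : ∀ i < j, Even (e i)) (h0 : e 0 ≠ -1)
    (he0 : e' 0 = e 0 - 1) (hej : ∀ i, e' (i + 1) = e (i + 1) + if i = j then 1 else 0) :
    ruleOf (mk L e) = Rule.increment ∧ P (mk L e) = mk L e' := by
  have hr : ruleOf (mk L e) = Rule.increment := by rw [ruleOf_of_odd hj ho, if_neg h0]
  refine ⟨hr, ?_⟩
  simp only [P, hr, findIdx_mk hj ho hev, headD_mk]
  apply List.ext_getElem?
  intro i
  simp only [List.getElem?_set, getElem?_mk, List.length_set, length_mk, List.getD_eq_getElem?_getD]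
  rcases i with _ | i
  · simp [he0]
  · rw [hej]
    by_cases hij : i = j
    · subst hij
      have : i + 1 ≤ L := hj
      simp [this]
    · have : ¬ j = i := fun h => hij h.symm
      simp [hij, this]

lemma halve_mk {L : ℕ} {e : ℕ → ℤ} (h0 : e 0 = -1) :
    ruleOf (mk (L + 1) e) = Rule.halve ∧ P (mk (L + 1) e) = mk L (fun i => e (i + 1)) := by
  have hr : ruleOf (mk (L + 1) e) = Rule.halve := by
    rw [ruleOf_of_odd (j := 0) (by omega) (by rw [h0]; decide), if_pos h0]
  refine ⟨hr, ?_⟩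
  simp only [P, hr]
  rw [mk_cons]
  rfl

lemma ruleOf_zero {L : ℕ} {e : ℕ → ℤ} (hev : ∀ i ≤ L + 1, Even (e i)) (hL : e L ≠ 0) :
    ruleOf (mk (L + 1) e) = Rule.zero := by
  have hall : ∀ x ∈ mk (L + 1) e, Even x := by
    intro x hx
    obtain ⟨i, hi, rfl⟩ := mem_mk.1 hx
    exact hev i hi
  have h1 : ¬ OverflowCond (mk (L + 1) e) := by
    rintro ⟨h, -⟩
    rw [leftmost_mk] at h
    exact (Int.not_even_iff_odd.2 h) (hev _ le_rfl)
  have h2 : ¬ HaltCond (mk (L + 1) e) := by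
    rintro ⟨-, -, h⟩
    rw [mk_succ, List.dropLast_concat] at h
    apply hL
    simpa [mk, List.range_succ] using h
  have h3 : ZeroCond (mk (L + 1) e) := ⟨hall, h2⟩
  simp only [ruleOf, h1, h2, h3, if_false, if_true]

lemma zero_mk {L : ℕ} {e e' : ℕ → ℤ} (hr : ruleOf (mk (L + 1) e) = Rule.zero)
    (h0 : e' 0 = e 0 - 1) (hm : ∀ i < L, e' (i + 1) = e (i + 1))
    (h1 : e' (L + 1) = e (L + 1) + 1) (h2 : e' (L + 2) = 0) (h3 : e' (L + 3) = 0) :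
    P (mk (L + 1) e) = mk (L + 3) e' := by
  simp only [P, hr, headD_mk, leftmost_mk, length_mk]
  rw [mk_succ (L + 2), mk_succ (L + 1), h2, h3, List.append_assoc]
  congr 1
  apply List.ext_getElem?
  intro i
  simp only [List.getElem?_set, getElem?_mk, List.length_set, length_mk]
  rcases i with _ | i
  · simp [h0]
  · rcases lt_trichotomy i L with h | h | h
    · have hLi : ¬ L = i := by omega
      simp [hm i h, hLi]
    · subst h
      simp [h1]
    · have hLi : ¬ L = i := by omega
      have hiL : ¬ i ≤ L := by omega
      simp [hLi, hiL]

/-! ### Gray code -/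

lemma near_mod (n i : ℕ) : near n i % 2 = (n / 2 ^ i + n / 2 ^ (i + 1)) % 2 := by
  have h : near n i = (n / 2 ^ i + 1) / 2 := by
    rw [near, pow_succ, ← Nat.div_div_eq_div_mul, Nat.add_div_right _ (by positivity)]
  rw [h, pow_succ, ← Nat.div_div_eq_div_mul]
  generalize n / 2 ^ i = b
  have hb : b % 4 = 0 ∨ b % 4 = 1 ∨ b % 4 = 2 ∨ b % 4 = 3 := by omega
  rcases hb with hb | hb | hb | hb <;> omega

/-- The entries `e 1, …, e L` have the parities of the Gray code digits of `n`. -/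
def HasGray (L : ℕ) (e : ℕ → ℤ) (n : ℕ) : Prop :=
  n < 2 ^ L ∧ ∀ i < L, e (i + 1) ≡ ((n / 2 ^ i + n / 2 ^ (i + 1) : ℕ) : ℤ) [ZMOD 2]

/-- Gray code decoding: the sum of `e i, …, e L` telescopes modulo 2 to a binary digit. -/
lemma HasGray.suffix {L : ℕ} {e : ℕ → ℤ} {n : ℕ} (h : HasGray L e n) {i : ℕ} (hi : i ≤ L) :
    ∑ j ∈ Finset.Icc (i + 1) L, e j ≡ ((n / 2 ^ i : ℕ) : ℤ) [ZMOD 2] := by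
  induction hi using Nat.decreasingInduction with
  | self => simp [Nat.div_eq_of_lt h.1]
  | of_succ i hi ih =>
    rw [← Finset.add_sum_Ioc_eq_sum_Icc (by omega : i + 1 ≤ L)]
    have h1 := (h.2 i hi).add ih
    have hIoc : Finset.Ioc (i + 1) L = Finset.Icc (i + 1 + 1) L := by
      ext; simp
    rw [hIoc]
    refine h1.trans ?_
    push_cast
    simp only [Int.ModEq]
    omega

lemma sum_bits (n L : ℕ) : ∑ i ∈ Finset.range L, 2 ^ i * (n / 2 ^ i % 2) = n % 2 ^ L := by
  induction L with
  | zero => simp [Nat.mod_one]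
  | succ L ih => rw [Finset.sum_range_succ, ih, Nat.mod_pow_succ]

lemma nOf_mk {L : ℕ} {e : ℕ → ℤ} {n : ℕ} (h : HasGray L e n) : nOf (mk L e) = n := by
  have hl : ell (mk L e) = L := by simp [ell, length_mk]
  rw [nOf, hl, ← Nat.mod_eq_of_lt h.1, ← sum_bits]
  refine Finset.sum_congr rfl fun i hi => ?_
  have hs : ∑ j ∈ Finset.Icc (i + 1) L, entry (mk L e) j = ∑ j ∈ Finset.Icc (i + 1) L, e j := by
    refine Finset.sum_congr rfl fun j hj => ?_
    have := (Finset.mem_Icc.1 hj).2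
    simp [entry, List.getD_eq_getElem?_getD, getElem?_mk, this]
  have := h.suffix (Finset.mem_range.1 hi).le
  rw [hs, this]
  congr 1

lemma odd_sum_mk {L : ℕ} {e : ℕ → ℤ} {n : ℕ} (h : HasGray L e n) :
    Odd (mk L e).sum ↔ Odd (e 0 + n) := by
  have h1 : (mk L e).sum = ∑ j ∈ Finset.range (L + 1), e j := rfl
  have h2 := h.suffix (Nat.zero_le L)
  have h3 : ∑ j ∈ Finset.range (L + 1), e j = e 0 + ∑ j ∈ Finset.Icc (0 + 1) L, e j := by
    rw [Finset.range_eq_Ico, Finset.sum_eq_sum_Ico_succ_bot (by omega)]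
    rfl
  rw [h1, h3]
  simp only [Int.ModEq, pow_zero, Nat.div_one] at h2
  rw [Int.odd_iff, Int.odd_iff]
  omega

lemma odd_of_isEmpty {L : ℕ} {e : ℕ → ℤ} {n : ℕ} (h : HasGray L e n)
    (hE : IsEmptyState (mk L e)) : n = 0 ∧ ¬ Odd (e 0 + n) := by
  obtain ⟨-, h1, h2, -⟩ := hE
  refine ⟨(nOf_mk h).symm.trans h1, fun ho => ?_⟩
  rw [sigma, if_pos ((odd_sum_mk h).2 ho)] at h2
  norm_num at h2

lemma isEmpty_mk {L : ℕ} {e : ℕ → ℤ} (hev : ∀ i ≤ L + 1, Even (e i)) (hL : e L ≠ 0) :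
    IsEmptyState (mk (L + 1) e) := by
  have hg : HasGray (L + 1) e 0 := by
    refine ⟨by positivity, fun i hi => ?_⟩
    have := Int.even_iff.1 (hev (i + 1) (by omega))
    simp only [Int.ModEq, this]
    simp
  refine ⟨by simp [mk_cons], nOf_mk hg, ?_, by rw [ruleOf_zero hev hL]; decide⟩
  rw [sigma, if_neg]
  rw [odd_sum_mk hg]
  simpa using hev 0 (by omega)

lemma near_succ {n j q : ℕ} (h : n + 1 = 2 ^ j * (2 * q + 1)) (i : ℕ) :
    near (n + 1) i = near n i + if i = j then 1 else 0 := by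
  have : n + 1 + 2 ^ i = (n + 2 ^ i) + 1 := by omega
  rw [near, this, Nat.succ_div, near]
  congr 1
  have hiff : 2 ^ (i + 1) ∣ n + 2 ^ i + 1 ↔ i = j := by
    rw [← this, h]
    rcases lt_trichotomy i j with hij | rfl | hij
    · obtain ⟨d, rfl⟩ := Nat.exists_eq_add_of_lt hij
      have e1 : 2 ^ (i + d + 1) * (2 * q + 1) + 2 ^ i =
          2 ^ i * (2 * (2 ^ d * (2 * q + 1)) + 1) := by ring
      rw [e1, pow_succ, Nat.mul_dvd_mul_iff_left (by positivity)]
      omega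
    · have e1 : 2 ^ i * (2 * q + 1) + 2 ^ i = 2 ^ (i + 1) * (q + 1) := by ring
      simp [e1]
    · obtain ⟨d, rfl⟩ := Nat.exists_eq_add_of_lt hij
      have e1 : 2 ^ j * (2 * q + 1) + 2 ^ (j + d + 1) =
          2 ^ j * (2 * (q + 2 ^ d) + 1) := by ring
      have e2 : 2 ^ (j + d + 1 + 1) = 2 ^ j * (2 * 2 ^ (d + 1)) := by ring
      rw [e1, e2, Nat.mul_dvd_mul_iff_left (by positivity)]
      constructor
      · intro hd
        have := (Dvd.intro _ rfl : 2 ∣ 2 * 2 ^ (d + 1)).trans hd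
        omega
      · intro; omega
  simp [hiff]

lemma div_even {n j q i : ℕ} (h : n = 2 ^ j * (2 * q + 1)) (hi : i < j) : n / 2 ^ i % 2 = 0 := by
  obtain ⟨d, rfl⟩ := Nat.exists_eq_add_of_lt hi
  have : n = 2 ^ i * (2 * (2 ^ d * (2 * q + 1))) := by rw [h]; ring
  rw [this, Nat.mul_div_cancel_left _ (by positivity)]
  omega

lemma near_even {n j q i : ℕ} (h : n = 2 ^ j * (2 * q + 1)) (hi : i + 1 < j) :
    near n i % 2 = 0 := by
  have h1 := div_even h hi
  have h2 := div_even h (by omega : i < j)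
  have := near_mod n i
  omega

lemma near_odd {n j q : ℕ} (h : n = 2 ^ (j + 1) * (2 * q + 1)) : near n j % 2 = 1 := by
  have h1 := div_even h (by omega : j < j + 1)
  have h2 : n / 2 ^ (j + 1) = 2 * q + 1 := by
    rw [h, Nat.mul_div_cancel_left _ (by positivity)]
  have := near_mod n j
  omega

/-- `⟨(2 ^ K - 1) / 2 ^ (i + 1)⟩ = 2 ^ (K - i - 1)`. -/
lemma near_pred {K i : ℕ} (hi : i < K) : near (2 ^ K - 1) i = 2 ^ (K - 1 - i) := by
  obtain ⟨d, rfl⟩ := Nat.exists_eq_add_of_lt hi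
  have h1 : i + d + 1 - 1 - i = d := by omega
  rw [h1, near]
  have h2 : 2 ^ (i + d + 1) = 2 ^ d * 2 ^ (i + 1) := by ring
  have h3 : 0 < 2 ^ (i + d + 1) := by positivity
  have h4 : 0 < 2 ^ i := by positivity
  have h5 : 2 ^ (i + 1) = 2 * 2 ^ i := by ring
  have h6 : 2 ^ (i + d + 1) - 1 + 2 ^ i = (2 ^ i - 1) + 2 ^ d * 2 ^ (i + 1) := by omega
  rw [h6, Nat.add_mul_div_right _ _ (by positivity), Nat.div_eq_of_lt (by omega), zero_add]

lemma near_eq_zero {K n i : ℕ} (hn : n < 2 ^ K) (hi : K ≤ i) : near n i = 0 := by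
  have h1 : 2 ^ K ≤ 2 ^ i := Nat.pow_le_pow_right (by norm_num) hi
  have h2 : 2 ^ (i + 1) = 2 * 2 ^ i := by ring
  exact Nat.div_eq_of_lt (by omega)

lemma near_two_mul (n i : ℕ) : near (2 * n) (i + 1) = near n i := by
  have h1 : 2 * n + 2 ^ (i + 1) = 2 * (n + 2 ^ i) := by ring
  have h2 : 2 ^ (i + 1 + 1) = 2 * 2 ^ (i + 1) := by ring
  rw [near, near, h1, h2, Nat.mul_div_mul_left _ _ (by norm_num)]

lemma near_zero (i : ℕ) : near 0 i = 0 := by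
  exact near_eq_zero (K := 0) (by norm_num) (by omega)

lemma exp_lt {n j q K : ℕ} (h : n = 2 ^ j * (2 * q + 1)) (hn : n < 2 ^ K) : j < K := by
  by_contra hj
  have h1 : 2 ^ K ≤ 2 ^ j := Nat.pow_le_pow_right (by norm_num) (by omega)
  have h2 : 2 ^ j * 1 ≤ 2 ^ j * (2 * q + 1) := Nat.mul_le_mul_left _ (by omega)
  omega

lemma exists_two_pow_mul {n : ℕ} (h : n ≠ 0) : ∃ j q, n = 2 ^ j * (2 * q + 1) := by
  obtain ⟨j, m, ⟨q, rfl⟩, hm⟩ := Nat.exists_eq_two_pow_mul_odd h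
  exact ⟨j, q, hm⟩

/-! ### The orbit of the initial state -/

/-- The state in the upward counting phase whose `n`-value is `n`. -/
def upSt (K n : ℕ) : State :=
  mk (K + 2) (cns (2 * 2 ^ K - 3 - n) fun i => (near n i : ℤ))

/-- The state in the downward counting phase whose `n`-value is `n`. -/
def downSt (K n : ℕ) : State :=
  mk (K + 1) (cns n fun i => 2 * (near (2 ^ K - 1) i : ℤ) - near n i)

/-- The state `Eprime k` for a general exponent `K` in the role of `2k + 2`. -/
def startSt (K : ℕ) : State :=
  mk (K + 1) (cns 0 (cns (2 ^ K - 2) fun i => 2 * (near (2 ^ K - 1) (i + 1) : ℤ)))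

/-- The state after the initial Zero rule. -/
def zeroSt (K : ℕ) : State :=
  mk (K + 3) (cns (-1) (cns (2 ^ K - 2) fun i => (near (2 ^ K - 1) i : ℤ)))

lemma hasGray_near {L n : ℕ} (hn : n < 2 ^ L) (a : ℤ) :
    HasGray L (cns a fun i => (near n i : ℤ)) n :=
  ⟨hn, fun i _ => Int.natCast_modEq_iff.2 (near_mod n i)⟩

lemma hasGray_down {L n : ℕ} (hn : n < 2 ^ L) (a : ℤ) (c : ℕ → ℤ) :
    HasGray L (cns a fun i => 2 * c i - (near n i : ℤ)) n := by
  refine ⟨hn, fun i _ => ?_⟩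
  have := near_mod n i
  simp only [cns, Int.ModEq]
  omega

lemma up_step {K n : ℕ} (hn : n + 3 ≤ 2 * 2 ^ K) :
    ruleOf (upSt K n) = Rule.increment ∧ P (upSt K n) = upSt K (n + 1) := by
  obtain ⟨j, q, h⟩ := exists_two_pow_mul (n := n + 1) (by omega)
  have hjK : j < K + 1 := exp_lt h (by rw [pow_succ]; omega)
  have hc : (n : ℤ) + 3 ≤ 2 * 2 ^ K := by exact_mod_cast hn
  have h0 : ∀ i, i ≠ j → near n i = near (n + 1) i := fun i hi => by
    rw [near_succ h]; simp [hi]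
  refine increment_mk (j := j) (by omega) ?_ ?_ ?_ ?_ ?_
  · rcases j with _ | j
    · simp only [cns]
      rw [pow_zero] at h
      rw [Int.odd_iff]
      omega
    · have := near_odd h
      simp only [cns]
      rw [h0 j (by omega), Int.odd_iff]
      exact_mod_cast this
  · intro i hi
    rcases i with _ | i
    · simp only [cns]
      have := div_even h hi
      rw [pow_zero, Nat.div_one] at this
      rw [Int.even_iff]
      omega
    · have := near_even h hi
      simp only [cns]
      rw [h0 i (by omega), Int.even_iff]
      exact_mod_cast this
  · simp only [cns]
    omega
  · simp only [cns]
    push_cast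
    ring
  · intro i
    simp only [cns]
    rw [near_succ h]
    push_cast
    rfl

lemma down_step {K n : ℕ} (hn : n + 1 < 2 ^ K) :
    ruleOf (downSt K (n + 1)) = Rule.increment ∧ P (downSt K (n + 1)) = downSt K n := by
  obtain ⟨j, q, h⟩ := exists_two_pow_mul (n := n + 1) (by omega)
  have hjK : j < K := exp_lt h hn
  refine increment_mk (j := j) (by omega) ?_ ?_ ?_ ?_ ?_
  · rcases j with _ | j
    · simp only [cns]
      rw [pow_zero] at h
      rw [Int.odd_iff]
      omega
    · have := near_odd h
      simp only [cns]
      rw [Int.odd_iff]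
      omega
  · intro i hi
    rcases i with _ | i
    · simp only [cns]
      have := div_even h hi
      rw [pow_zero, Nat.div_one] at this
      rw [Int.even_iff]
      omega
    · have := near_even h hi
      simp only [cns]
      rw [Int.even_iff]
      omega
  · simp only [cns]
    omega
  · simp [cns]
  · intro i
    simp only [cns]
    rw [near_succ h]
    push_cast
    ring

lemma start_even {K : ℕ} (hK : 0 < K) (i : ℕ) :
    Even (cns 0 (cns (2 ^ K - 2) fun i => 2 * (near (2 ^ K - 1) (i + 1) : ℤ)) i) := by
  rcases i with _ | _ | i
  · simp [cns]
  · simp only [cns]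
    obtain ⟨K, rfl⟩ := Nat.exists_eq_succ_of_ne_zero hK.ne'
    rw [pow_succ, Int.even_iff]
    omega
  · simp [cns]

lemma start_ne {K : ℕ} (hK : 2 ≤ K) :
    cns 0 (cns (2 ^ K - 2) fun i => 2 * (near (2 ^ K - 1) (i + 1) : ℤ)) K ≠ 0 := by
  obtain ⟨K, rfl⟩ := Nat.exists_eq_add_of_le' hK
  simp only [cns]
  rw [near_pred (by omega)]
  positivity

lemma start_rule {K : ℕ} (hK : 2 ≤ K) : ruleOf (startSt K) = Rule.zero :=
  ruleOf_zero (fun i _ => start_even (by omega) i) (start_ne hK)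

lemma start_step {K : ℕ} (hK : 2 ≤ K) : P (startSt K) = zeroSt K := by
  have hlt : 2 ^ K - 1 < 2 ^ K := Nat.sub_lt (by positivity) one_pos
  obtain ⟨K, rfl⟩ := Nat.exists_eq_add_of_le' hK
  refine zero_mk (start_rule hK) ?_ ?_ ?_ ?_ ?_
  · simp [cns]
  · intro i hi
    rcases i with _ | i
    · simp [cns]
    · simp only [cns]
      rw [near_pred (by omega), near_pred (by omega),
        show K + 2 - 1 - i = K + 2 - 1 - (i + 1) + 1 by omega]
      push_cast
      ring
  · simp only [cns]
    rw [near_pred (by omega), near_eq_zero hlt (by omega)]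
    simp
  · simp only [cns]
    rw [near_eq_zero hlt (by omega)]
    rfl
  · simp only [cns]
    rw [near_eq_zero hlt (by omega)]
    rfl

lemma zero_step (K : ℕ) :
    ruleOf (zeroSt K) = Rule.halve ∧ P (zeroSt K) = upSt K (2 ^ K - 1) := by
  obtain ⟨h1, h2⟩ := halve_mk (L := K + 2)
    (e := cns (-1) (cns (2 ^ K - 2) fun i => (near (2 ^ K - 1) i : ℤ))) rfl
  refine ⟨h1, h2.trans (mk_congr ?_)⟩
  have hp : 1 ≤ 2 ^ K := Nat.one_le_two_pow
  rintro (_ | i) -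
  · simp only [cns]
    push_cast [hp]
    ring
  · simp [cns]

lemma up_last {K : ℕ} :
    ruleOf (upSt K (2 * (2 ^ K - 1))) = Rule.halve ∧
      P (upSt K (2 * (2 ^ K - 1))) = downSt K (2 ^ K - 1) := by
  have hp : 1 ≤ 2 ^ K := Nat.one_le_two_pow
  obtain ⟨h1, h2⟩ := halve_mk (L := K + 1)
    (e := cns (2 * 2 ^ K - 3 - (2 * (2 ^ K - 1) : ℕ))
      fun i => (near (2 * (2 ^ K - 1)) i : ℤ)) (by
        simp only [cns]
        push_cast [hp]
        ring)
  refine ⟨h1, h2.trans (mk_congr ?_)⟩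
  rintro (_ | i) -
  · simp only [cns, near]
    congr 1
    omega
  · simp only [cns]
    rw [near_two_mul]
    ring

lemma iter_up {K t : ℕ} (hK : 2 ≤ K) (ht : t < 2 ^ K) :
    P^[2 + t] (startSt K) = upSt K (2 ^ K - 1 + t) := by
  induction t with
  | zero =>
    rw [Function.iterate_succ_apply', Function.iterate_one, start_step hK, (zero_step K).2]
    rfl
  | succ t ih =>
    rw [← add_assoc, Function.iterate_succ_apply', ih (by omega), (up_step (by omega)).2]
    rfl

lemma iter_down {K t : ℕ} (hK : 2 ≤ K) (ht : t < 2 ^ K) :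
    P^[2 ^ K + 2 + t] (startSt K) = downSt K (2 ^ K - 1 - t) := by
  induction t with
  | zero =>
    rw [show 2 ^ K + 2 + 0 = (2 + (2 ^ K - 1)) + 1 by omega, Function.iterate_succ_apply',
      iter_up hK (by omega), ← two_mul, up_last.2]
    rfl
  | succ t ih =>
    rw [← add_assoc, Function.iterate_succ_apply', ih (by omega),
      show 2 ^ K - 1 - t = (2 ^ K - 1 - (t + 1)) + 1 by omega, (down_step (by omega)).2]

lemma up_not_empty {K n : ℕ} (hn : n < 2 ^ (K + 2)) : ¬ IsEmptyState (upSt K n) := by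
  intro h
  apply (odd_of_isEmpty (hasGray_near hn _) h).2
  simp only [cns]
  rw [Int.odd_iff]
  omega

lemma down_not_empty {K n : ℕ} (hn : n < 2 ^ (K + 1)) (h0 : n ≠ 0) :
    ¬ IsEmptyState (downSt K n) := fun h =>
  h0 (odd_of_isEmpty (hasGray_down hn _ _) h).1

lemma zero_not_empty {K : ℕ} (hK : 0 < K) : ¬ IsEmptyState (zeroSt K) := by
  have hp : 1 ≤ 2 ^ K := Nat.one_le_two_pow
  have e1 : 2 ^ (K + 3) = 8 * 2 ^ K := by ring
  have h : HasGray (K + 3) (cns (-1) (cns (2 ^ K - 2) fun i => (near (2 ^ K - 1) i : ℤ)))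
      (2 * 2 ^ K - 1) := by
    refine ⟨by omega, ?_⟩
    have e2 : (2 * 2 ^ K - 1) / 2 = 2 ^ K - 1 := by omega
    rintro (_ | i) -
    · obtain ⟨K, rfl⟩ := Nat.exists_eq_succ_of_ne_zero hK.ne'
      rw [pow_zero, zero_add, pow_one, e2, Nat.div_one]
      simp only [cns, Int.ModEq]
      have e3 : (2 : ℤ) ^ K.succ = 2 * 2 ^ K := by rw [pow_succ]; ring
      have e4 : 2 ^ K.succ = 2 * 2 ^ K := by rw [pow_succ]; ring
      rw [e3]
      omega
    · have h1 : ∀ i, (2 * 2 ^ K - 1) / 2 ^ (i + 1) = (2 ^ K - 1) / 2 ^ i := fun i => by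
        rw [pow_succ', ← Nat.div_div_eq_div_mul, e2]
      rw [h1, h1]
      exact Int.natCast_modEq_iff.2 (near_mod _ i)
  intro hE
  have := (odd_of_isEmpty h hE).1
  omega

lemma start_empty {K : ℕ} (hK : 2 ≤ K) : IsEmptyState (startSt K) :=
  isEmpty_mk (fun i _ => start_even (by omega) i) (start_ne hK)

lemma final_empty {K : ℕ} (hK : 0 < K) : IsEmptyState (downSt K 0) := by
  refine isEmpty_mk (fun i _ => ?_) ?_
  · rcases i with _ | i <;> simp [cns, near_zero]
  · obtain ⟨K, rfl⟩ := Nat.exists_eq_succ_of_ne_zero hK.ne'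
    simp only [cns, near_zero]
    rw [near_pred (by omega)]
    simp

/-- Before the next empty state, the rules after the initial Zero rule are Increment rules except
at the times `1` and `2 ^ K + 1`. -/
lemma orbit {K t : ℕ} (hK : 2 ≤ K) (h0 : 0 < t) (ht : t < 2 * 2 ^ K + 1) :
    ¬ IsEmptyState (P^[t] (startSt K)) ∧ ruleOf (P^[t] (startSt K)) =
      if t = 1 ∨ t = 2 ^ K + 1 then Rule.halve else Rule.increment := by
  have hp : 4 ≤ 2 ^ K := by simpa using Nat.pow_le_pow_right (n := 2) (by norm_num) hK
  have e1 : 2 ^ (K + 1) = 2 * 2 ^ K := by ring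
  have e2 : 2 ^ (K + 2) = 4 * 2 ^ K := by ring
  obtain rfl | ⟨s, hs, rfl⟩ | rfl | ⟨s, hs, rfl⟩ : t = 1 ∨ (∃ s, s + 1 < 2 ^ K ∧ t = 2 + s) ∨
      t = 2 + (2 ^ K - 1) ∨ (∃ s, s + 1 < 2 ^ K ∧ t = 2 ^ K + 2 + s) := by
    rcases lt_trichotomy t (2 ^ K + 1) with h | h | h
    · by_cases h1 : t = 1
      · exact Or.inl h1
      · exact Or.inr (Or.inl ⟨t - 2, by omega, by omega⟩)
    · exact Or.inr (Or.inr (Or.inl (by omega)))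
    · exact Or.inr (Or.inr (Or.inr ⟨t - (2 ^ K + 2), by omega, by omega⟩))
  · rw [Function.iterate_one, start_step hK, if_pos (Or.inl rfl)]
    exact ⟨zero_not_empty (by omega), (zero_step K).1⟩
  · rw [iter_up hK (by omega), if_neg (by omega)]
    exact ⟨up_not_empty (by omega), (up_step (by omega)).1⟩
  · rw [iter_up hK (by omega), if_pos (Or.inr (by omega)), ← two_mul]
    exact ⟨up_not_empty (by omega), up_last.1⟩
  · rw [iter_down hK (by omega), if_neg (by omega)]
    refine ⟨down_not_empty (by omega) (by omega), ?_⟩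
    rw [show 2 ^ K - 1 - s = (2 ^ K - 1 - s - 1) + 1 by omega]
    exact (down_step (by omega)).1

lemma nextEmptyAt_start {K : ℕ} (hK : 2 ≤ K) :
    NextEmptyAt (startSt K) (2 * 2 ^ K + 1) ∧ P^[2 * 2 ^ K + 1] (startSt K) = downSt K 0 := by
  have hp : 1 ≤ 2 ^ K := Nat.one_le_two_pow
  have h : P^[2 * 2 ^ K + 1] (startSt K) = downSt K 0 := by
    rw [show 2 * 2 ^ K + 1 = 2 ^ K + 2 + (2 ^ K - 1) by omega, iter_down hK (by omega), Nat.sub_self]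
  exact ⟨⟨by omega, h ▸ final_empty (by omega), fun t h0 ht => (orbit hK h0 ht).1⟩, h⟩

lemma NextEmptyAt.unique {E : State} {m m' : ℕ} (h : NextEmptyAt E m) (h' : NextEmptyAt E m') :
    m = m' := by
  rcases lt_trichotomy m m' with hlt | rfl | hlt
  · exact absurd h.2.1 (h'.2.2 m h.1 hlt)
  · rfl
  · exact absurd h'.2.1 (h.2.2 m' h'.1 hlt)

lemma N_start {K : ℕ} (hK : 2 ≤ K) : N (startSt K) = downSt K 0 := by
  obtain ⟨h1, h2⟩ := nextEmptyAt_start hK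
  have hex : ∃ m, NextEmptyAt (startSt K) m := ⟨_, h1⟩
  rw [N, dif_pos hex, hex.choose_spec.unique h1, h2]

lemma embanked_start {K : ℕ} (hK : 2 ≤ K) : Embanked (startSt K) := by
  have hp : 1 ≤ 2 ^ K := Nat.one_le_two_pow
  refine ⟨start_empty hK, 2 * 2 ^ K + 1, 1, 2 ^ K + 1, (nextEmptyAt_start hK).1, by omega,
    by omega, by omega, ?_, ?_, fun t h0 ht h1 h2 => ?_⟩
  · rw [(orbit hK (by omega) (by omega)).2, if_pos (Or.inl rfl)]
  · rw [(orbit hK (by omega) (by omega)).2, if_pos (Or.inr rfl)]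
  · rw [(orbit hK h0 ht).2, if_neg (by tauto)]

lemma halve_iff {K t : ℕ} (hK : 2 ≤ K) (ht : t < 2 * 2 ^ K + 1) :
    ruleOf (P^[t] (startSt K)) = Rule.halve ↔ t = 1 ∨ t = 2 ^ K + 1 := by
  rcases Nat.eq_zero_or_pos t with rfl | h0
  · simp [start_rule hK]
  · rw [(orbit hK h0 ht).2]
    split_ifs with h <;> simp [h]

lemma hVal_one {K : ℕ} (hK : 2 ≤ K) : hVal (startSt K) 1 = 2 ^ K - 1 := by
  have hp : 1 ≤ 2 ^ K := Nat.one_le_two_pow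
  have e2 : 2 ^ (K + 2) = 4 * 2 ^ K := by ring
  set p : ℕ → Prop := fun j => ruleOf (P^[j] (startSt K)) = Rule.halve
  have h0 : Nat.count p 1 = 0 := by
    rw [Nat.count_eq_card_filter_range, Finset.card_eq_zero, Finset.filter_eq_empty_iff]
    intro t ht
    rw [Finset.mem_range] at ht
    refine fun h => ?_
    have := (halve_iff hK (by omega)).1 h
    omega
  have h1 : Nat.nth p 0 = 1 := by
    rw [← h0]
    exact Nat.nth_count (p := p) ((halve_iff hK (by omega)).2 (Or.inl rfl))
  rw [hVal, Nat.sub_self, h1]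
  have := iter_up (t := 0) hK (by omega)
  rw [show 1 + 1 = 2 + 0 by rfl, this, add_zero]
  exact nOf_mk (hasGray_near (by omega) _)

lemma hVal_two {K : ℕ} (hK : 2 ≤ K) : hVal (startSt K) 2 = 2 ^ K - 1 := by
  have hp : 1 ≤ 2 ^ K := Nat.one_le_two_pow
  have e1 : 2 ^ (K + 1) = 2 * 2 ^ K := by ring
  set p : ℕ → Prop := fun j => ruleOf (P^[j] (startSt K)) = Rule.halve
  have h0 : Nat.count p (2 ^ K + 1) = 1 := by
    rw [Nat.count_eq_card_filter_range, Finset.card_eq_one]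
    refine ⟨1, ?_⟩
    ext t
    rw [Finset.mem_filter, Finset.mem_range, Finset.mem_singleton]
    constructor
    · rintro ⟨h1, h2⟩
      have := (halve_iff hK (by omega)).1 h2
      omega
    · rintro rfl
      exact ⟨by omega, (halve_iff hK (by omega)).2 (Or.inl rfl)⟩
  have h1 : Nat.nth p 1 = 2 ^ K + 1 := by
    have := Nat.nth_count (p := p) ((halve_iff hK (by omega)).2 (Or.inr rfl))
    rwa [h0] at this
  rw [hVal, show 2 - 1 = 1 by rfl, h1]
  have := iter_down (t := 0) hK (by omega)
  rw [show 2 ^ K + 1 + 1 = 2 ^ K + 2 + 0 by rfl, this, Nat.sub_zero]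
  exact nOf_mk (hasGray_down (by omega) _ _)

/-! ### Identification with the explicit lists -/

lemma Eprime_eq (k : ℕ) : Eprime k = startSt (2 * k + 2) := by
  have hlt : 2 ^ (2 * k + 2) - 1 < 2 ^ (2 * k + 2) := Nat.sub_lt (by positivity) one_pos
  rw [startSt, mk_cons, mk_cons, mk_succ, Eprime]
  simp only [cns]
  rw [near_eq_zero hlt (by omega)]
  congr 3
  apply List.map_congr_left
  intro i hi
  rw [List.mem_range] at hi
  rw [near_pred (by omega), show 2 * k + 1 - i = 2 * k + 2 - 1 - (i + 1) + 1 by omega]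
  push_cast
  ring

lemma Sk_eq (k : ℕ) : Sk (k + 1) = downSt (2 * k + 2) 0 := by
  have hlt : 2 ^ (2 * k + 2) - 1 < 2 ^ (2 * k + 2) := Nat.sub_lt (by positivity) one_pos
  rw [downSt, mk_cons, mk_succ, Sk]
  simp only [cns, near_zero]
  rw [near_eq_zero hlt (by omega)]
  congr 2
  apply List.map_congr_left
  intro i hi
  rw [List.mem_range] at hi
  rw [near_pred (by omega), show 2 * (k + 1) - i = 2 * k + 2 - 1 - i + 1 by omega]
  push_cast
  ring

lemma bump_eq (k : ℕ) : bump (Eprime k) 1 = Sk (k + 1) := by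
  rw [Eprime, Sk, show 2 * (k + 1) = 2 * k + 1 + 1 by ring, List.range_succ_eq_map (n := 2 * k + 1)]
  simp [bump, Function.comp_def]

/-- The state `E' = (0, 2, 2^2, 2^3, …, 2^{2k}, 2^{2k+1}, 2^{2k+2} - 2, 0)`
is embanked with `h(E') = (2^{2k+2} - 1, 2^{2k+2} - 1)`, and
`N(E') = E'[1] = (0, 2, 2^2, …, 2^{2k+2}, 0) = S_{k+1}`. -/
theorem statement_18 (k : ℕ) :
    Embanked (Eprime k) ∧
    hVal (Eprime k) 1 = 2 ^ (2 * k + 2) - 1 ∧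
    hVal (Eprime k) 2 = 2 ^ (2 * k + 2) - 1 ∧
    N (Eprime k) = bump (Eprime k) 1 ∧
    bump (Eprime k) 1 = Sk (k + 1) := by
  have hK : 2 ≤ 2 * k + 2 := by omega
  refine ⟨?_, ?_, ?_, ?_, bump_eq k⟩
  · rw [Eprime_eq]; exact embanked_start hK
  · rw [Eprime_eq]; exact hVal_one hK
  · rw [Eprime_eq]; exact hVal_two hK
  · rw [bump_eq, Sk_eq, Eprime_eq]; exact N_start hK

end Skelet17
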